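/- Let b_{2k} = b_{2k+1} = 4^{−k}·binomial(2k,k), T_n(x) = Σ_{k=0}^n b_k cos(kx), and α = min over t ∈ [0, π) of T_6(t)/(t − π)^2. Then 0.1229 < α < 0.123. -/

import Mathlib

open Real

noncomputable def b (k : ℕ) : ℝ := (Nat.choose (2*(k/2)) (k/2) : ℝ) / 4^(k/2)

noncomputable def T6 (x : ℝ) : ℝ :=
  ∑ k ∈ Finset.range 7, b k * cos (k * x)

noncomputable def α : ℝ := sInf ((fun t => T6 t / (t - π)^2) '' Set.Ico 0 π)

/-!
Write `T6 t = p (cos t)` with `p` of degree 6. The function `F t = p (cos t) - 0.122901 (t - π)²`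
is nonnegative on `[0, π]`, but its minimum, attained near `π / 4 - 1 / 17`, is only `1.7e-5`.

* Where `3 / 5 ≤ cos t ≤ 17 / 20` one has `1 ≤ F''`, hence `F t ≥ F t₀ - (F' t₀)² / 2` for each
  `t₀` there. For `t₀ = π / 4 - 1 / 17` the loss `(F' t₀)² / 2` is negligible, and Taylor bounds
  for `cos (1 / 17)` and `sin (1 / 17)` give `F t₀` and `F' t₀`.
* Elsewhere Jordan-type inequalities bound `(t - π)²` by a quadratic polynomial in `cos t`, and a
  polynomial inequality in `cos t` remains.

The value of `T6 t / (t - π)²` at `t₀` also gives the upper bound.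
-/

open Polynomial Set

section SecondOrder

variable {S : Set ℝ} {f f' f'' : ℝ → ℝ} {m x y : ℝ}

lemma add_mul_sub_le_of_convexOn {d : ℝ} (hf : ConvexOn ℝ S f) (hx : x ∈ S) (hy : y ∈ S)
    (hd : HasDerivAt f d x) : f x + d * (y - x) ≤ f y := by
  rcases lt_trichotomy y x with hyx | rfl | hxy
  · have hslope := hf.slope_le_of_hasDerivAt hy hx hyx hd
    rw [slope_def_field, div_le_iff₀ (sub_pos.2 hyx)] at hslope
    linarith
  · simp
  · have hslope := hf.le_slope_of_hasDerivAt hx hy hxy hd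
    rw [slope_def_field, le_div_iff₀ (sub_pos.2 hxy)] at hslope
    linarith

lemma add_mul_sub_add_sq_le_of_le_deriv2 (hS : Convex ℝ S) (hf : ∀ z ∈ S, HasDerivAt f (f' z) z)
    (hf' : ∀ z ∈ S, HasDerivAt f' (f'' z) z) (hm : ∀ z ∈ S, m ≤ f'' z) (hx : x ∈ S) (hy : y ∈ S) :
    f x + f' x * (y - x) + m / 2 * (y - x) ^ 2 ≤ f y := by
  have hg : ∀ z ∈ S,
      HasDerivAt (fun z => f z - m / 2 * (z - x) ^ 2) (f' z - m * (z - x)) z := fun z hz => by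
    refine ((hf z hz).sub
      ((((hasDerivAt_id z).sub_const x).pow 2).const_mul (m / 2))).congr_deriv ?_
    simp only [id_eq, Nat.cast_ofNat]
    ring
  have hg' : ∀ z ∈ S, HasDerivAt (fun z => f' z - m * (z - x)) (f'' z - m) z := fun z hz =>
    ((hf' z hz).sub (((hasDerivAt_id z).sub_const x).const_mul m)).congr_deriv (by ring)
  have hconvex : ConvexOn ℝ S (fun z => f z - m / 2 * (z - x) ^ 2) :=
    convexOn_of_hasDerivWithinAt2_nonneg hS
      (fun z hz => (hg z hz).continuousAt.continuousWithinAt)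
      (fun z hz => (hg z (interior_subset hz)).hasDerivWithinAt)
      (fun z hz => (hg' z (interior_subset hz)).hasDerivWithinAt)
      (fun z hz => sub_nonneg.2 (hm z (interior_subset hz)))
  have htangent := add_mul_sub_le_of_convexOn hconvex hx hy (hg x hx)
  linarith

lemma sub_sq_div_le_of_le_deriv2 (hS : Convex ℝ S) (hf : ∀ z ∈ S, HasDerivAt f (f' z) z)
    (hf' : ∀ z ∈ S, HasDerivAt f' (f'' z) z) (hm₀ : 0 < m) (hm : ∀ z ∈ S, m ≤ f'' z)
    (hx : x ∈ S) (hy : y ∈ S) : f x - f' x ^ 2 / (2 * m) ≤ f y := by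
  have hsquare : 0 ≤ (f' x + m * (y - x)) ^ 2 / (2 * m) := by positivity
  calc f x - f' x ^ 2 / (2 * m)
      ≤ f x - f' x ^ 2 / (2 * m) + (f' x + m * (y - x)) ^ 2 / (2 * m) := by linarith
    _ = f x + f' x * (y - x) + m / 2 * (y - x) ^ 2 := by field_simp; ring
    _ ≤ f y := add_mul_sub_add_sq_le_of_le_deriv2 hS hf hf' hm hx hy

end SecondOrder

section PolynomialInCosine

variable (p : ℝ[X]) (a z t : ℝ)

lemma hasDerivAt_eval_cos :
    HasDerivAt (fun t => p.eval (cos t)) (-(p.derivative.eval (cos t) * sin t)) t :=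
  ((p.hasDerivAt (cos t)).comp t (hasDerivAt_cos t)).congr_deriv (by ring)

lemma hasDerivAt_eval_cos_sub_mul_sq :
    HasDerivAt (fun t => p.eval (cos t) - a * (t - z) ^ 2)
      (-(p.derivative.eval (cos t) * sin t) - 2 * a * (t - z)) t := by
  refine ((hasDerivAt_eval_cos p t).sub
    ((((hasDerivAt_id t).sub_const z).pow 2).const_mul a)).congr_deriv ?_
  simp only [id_eq, Nat.cast_ofNat]
  ring

lemma hasDerivAt_deriv_eval_cos_sub_mul_sq :
    HasDerivAt (fun t => -(p.derivative.eval (cos t) * sin t) - 2 * a * (t - z))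
      (p.derivative.derivative.eval (cos t) * (1 - cos t ^ 2) - p.derivative.eval (cos t) * cos t
        - 2 * a) t := by
  refine (((hasDerivAt_eval_cos p.derivative t).mul (hasDerivAt_sin t)).neg.sub
    (((hasDerivAt_id t).sub_const z).const_mul (2 * a))).congr_deriv ?_
  rw [← sin_sq]
  ring

end PolynomialInCosine

lemma convex_setOf_cos_mem_Icc (l u : ℝ) : Convex ℝ {t ∈ Icc 0 π | cos t ∈ Icc l u} := by
  have hanti : AntitoneOn cos (Icc 0 π) := strictAntiOn_cos.antitoneOn
  have hinter : {t ∈ Icc 0 π | cos t ∈ Icc l u} =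
      {t ∈ Icc 0 π | l ≤ cos t} ∩ {t ∈ Icc 0 π | cos t ≤ u} := sep_and
  rw [hinter]
  exact (hanti.convex_ge (convex_Icc 0 π) l).inter (hanti.convex_le (convex_Icc 0 π) u)

lemma sub_pi_sq_le_of_le_pi_div_two {t : ℝ} (ht₀ : 0 ≤ t) (ht : t ≤ π / 2) :
    (t - π) ^ 2 ≤ (π / 2) ^ 2 * (1 + cos t) ^ 2 := by
  have hcos : π / 2 * (1 - 2 / π * t) ≤ π / 2 * cos t :=
    mul_le_mul_of_nonneg_left (one_sub_mul_le_cos ht₀ ht) (by positivity)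
  have hcancel : π / 2 * (1 - 2 / π * t) = π / 2 - t := by field_simp
  rw [← mul_pow, ← neg_sub, neg_sq]
  exact pow_le_pow_left₀ (by linarith) (by linarith) 2

lemma sub_pi_sq_le_of_pi_div_two_le {t : ℝ} (ht : π / 2 ≤ t) (htπ : t ≤ π) :
    (t - π) ^ 2 ≤ (π / 2) ^ 2 * (1 - cos t ^ 2) := by
  have hsin : π / 2 * (2 / π * (π - t)) ≤ π / 2 * sin (π - t) :=
    mul_le_mul_of_nonneg_left (mul_le_sin (by linarith) (by linarith)) (by positivity)
  have hcancel : π / 2 * (2 / π * (π - t)) = π - t := by field_simp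
  rw [hcancel, sin_pi_sub] at hsin
  rw [← sin_sq, ← mul_pow, ← neg_sub, neg_sq]
  exact pow_le_pow_left₀ (by linarith) hsin 2

/-- The Vietoris polynomial of degree `n` in the variable `cos x`, that is
`∑ k ≤ n, b k * cos (k * x)` expanded in Chebyshev polynomials of the first kind. -/
noncomputable def vietorisPoly (n : ℕ) : ℝ[X] :=
  ∑ k ∈ Finset.range (n + 1), C (b k) * Chebyshev.T ℝ k

lemma eval_vietorisPoly_cos (n : ℕ) (x : ℝ) :
    (vietorisPoly n).eval (cos x) = ∑ k ∈ Finset.range (n + 1), b k * cos (k * x) := by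
  simp [vietorisPoly, eval_finsetSum]

lemma T6_eq_eval_vietorisPoly (x : ℝ) : T6 x = (vietorisPoly 6).eval (cos x) :=
  (eval_vietorisPoly_cos 6 x).symm

lemma vietorisPoly_six : vietorisPoly 6 =
    C (9 / 16) + C (11 / 8) * X + C (29 / 8) * X ^ 2 - C (11 / 2) * X ^ 3 - C 12 * X ^ 4
      + C 6 * X ^ 5 + C 10 * X ^ 6 := by
  refine Polynomial.funext fun c => ?_
  have hT (n : ℤ) : (Chebyshev.T ℝ (n + 2)).eval c
      = 2 * c * (Chebyshev.T ℝ (n + 1)).eval c - (Chebyshev.T ℝ n).eval c := by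
    simp [Chebyshev.T_add_two]
  have hT₂ : (Chebyshev.T ℝ 2).eval c = 2 * c ^ 2 - 1 := by simp [Chebyshev.T_two]
  have hT₃ : (Chebyshev.T ℝ 3).eval c = 4 * c ^ 3 - 3 * c :=
    (hT 1).trans (by rw [one_add_one_eq_two, hT₂, Chebyshev.T_one, eval_X]; ring)
  have hT₄ : (Chebyshev.T ℝ 4).eval c = 8 * c ^ 4 - 8 * c ^ 2 + 1 :=
    (hT 2).trans (by rw [show (2 + 1 : ℤ) = 3 from rfl, hT₃, hT₂]; ring)
  have hT₅ : (Chebyshev.T ℝ 5).eval c = 16 * c ^ 5 - 20 * c ^ 3 + 5 * c :=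
    (hT 3).trans (by rw [show (3 + 1 : ℤ) = 4 from rfl, hT₄, hT₃]; ring)
  have hT₆ : (Chebyshev.T ℝ 6).eval c = 32 * c ^ 6 - 48 * c ^ 4 + 18 * c ^ 2 - 1 :=
    (hT 4).trans (by rw [show (4 + 1 : ℤ) = 5 from rfl, hT₅, hT₄]; ring)
  have hb₀ : b 0 = 1 ∧ b 1 = 1 := by norm_num [b]
  have hb₂ : b 2 = 1 / 2 ∧ b 3 = 1 / 2 := by norm_num [b]
  have hb₄ : b 4 = 3 / 8 ∧ b 5 = 3 / 8 := by norm_num [b, show Nat.choose 4 2 = 6 from rfl]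
  have hb₆ : b 6 = 5 / 16 := by norm_num [b, show Nat.choose 6 3 = 20 from rfl]
  simp only [vietorisPoly, Finset.sum_range_succ, Finset.sum_range_zero, Nat.cast_zero,
    Nat.cast_one, Nat.cast_ofNat, eval_add, eval_sub, eval_mul, eval_pow, eval_C, eval_X, eval_zero,
    Chebyshev.T_zero, Chebyshev.T_one, eval_one, hT₂, hT₃, hT₄, hT₅, hT₆, hb₀, hb₂, hb₄, hb₆]
  ring

lemma eval_vietorisPoly_six (c : ℝ) : (vietorisPoly 6).eval c =
    9 / 16 + 11 / 8 * c + 29 / 8 * c ^ 2 - 11 / 2 * c ^ 3 - 12 * c ^ 4 + 6 * c ^ 5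
      + 10 * c ^ 6 := by
  simp [vietorisPoly_six]

lemma eval_derivative_vietorisPoly_six (c : ℝ) : (vietorisPoly 6).derivative.eval c =
    11 / 8 + 29 / 4 * c - 33 / 2 * c ^ 2 - 48 * c ^ 3 + 30 * c ^ 4 + 60 * c ^ 5 := by
  simp only [vietorisPoly_six, derivative_add, derivative_sub, derivative_C_mul, derivative_C,
    derivative_X, derivative_X_pow, eval_add, eval_sub, eval_mul, eval_pow, eval_C, eval_X,
    eval_one, eval_zero, Nat.cast_ofNat]
  ring

lemma eval_derivative_derivative_vietorisPoly_six (c : ℝ) :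
    (vietorisPoly 6).derivative.derivative.eval c =
      29 / 4 - 33 * c - 144 * c ^ 2 + 120 * c ^ 3 + 300 * c ^ 4 := by
  simp only [vietorisPoly_six, derivative_add, derivative_sub, derivative_mul, derivative_C,
    derivative_X, derivative_X_pow, derivative_one, derivative_zero, eval_add, eval_sub,
    eval_mul, eval_pow, eval_C, eval_X, eval_one, eval_zero, Nat.cast_ofNat]
  ring

section PolynomialInequalities

variable {c l u : ℝ}

-- A polynomial of degree at most `n` with nonnegative Bernstein coefficients on `[l, u]` is a
-- nonnegative combination of these products with `i + j = n`, which `linarith` can find.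
lemma pow_mul_pow_nonneg_of_mem_Icc (hc : c ∈ Icc l u) (i j : ℕ) :
    0 ≤ (c - l) ^ i * (u - c) ^ j :=
  mul_nonneg (pow_nonneg (sub_nonneg.2 hc.1) i) (pow_nonneg (sub_nonneg.2 hc.2) j)

lemma mul_one_sub_sq_le_eval_vietorisPoly_six (hc : c ∈ Icc (-1) 0) :
    0.3034 * (1 - c ^ 2) ≤ (vietorisPoly 6).eval c := by
  rw [eval_vietorisPoly_six]
  rcases le_total c (-(3 / 4)) with hle | hge
  · have hB := pow_mul_pow_nonneg_of_mem_Icc ⟨hc.1, hle⟩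
    linarith [hB 0 6, hB 1 5, hB 2 4, hB 3 3, hB 4 2, hB 5 1, hB 6 0]
  · have hB := pow_mul_pow_nonneg_of_mem_Icc ⟨hge, hc.2⟩
    linarith [hB 0 6, hB 1 5, hB 2 4, hB 3 3, hB 4 2, hB 5 1, hB 6 0]

lemma mul_one_add_sq_le_eval_vietorisPoly_six (hc : c ∈ Icc 0 (3 / 5) ∪ Icc (17 / 20) 1) :
    0.3034 * (1 + c) ^ 2 ≤ (vietorisPoly 6).eval c := by
  rw [eval_vietorisPoly_six]
  rcases hc with hc | hc
  all_goals
    have hB := pow_mul_pow_nonneg_of_mem_Icc hc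
    linarith [hB 0 6, hB 1 5, hB 2 4, hB 3 3, hB 4 2, hB 5 1, hB 6 0]

lemma one_le_deriv2_eval_vietorisPoly_six_cos_sub_mul_sq (hc : c ∈ Icc (3 / 5) (17 / 20)) :
    1 ≤ (vietorisPoly 6).derivative.derivative.eval c * (1 - c ^ 2)
      - (vietorisPoly 6).derivative.eval c * c - 2 * 0.122901 := by
  rw [eval_derivative_derivative_vietorisPoly_six, eval_derivative_vietorisPoly_six]
  have hB := pow_mul_pow_nonneg_of_mem_Icc hc
  linarith [hB 0 6, hB 1 5, hB 2 4, hB 3 3, hB 4 2, hB 5 1, hB 6 0]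

lemma eval_vietorisPoly_six_mem_Icc (hc : c ∈ Icc 0.747453 0.747455) :
    (vietorisPoly 6).eval c ∈ Icc 0.716812 0.716815 := by
  rw [eval_vietorisPoly_six]
  have hB := pow_mul_pow_nonneg_of_mem_Icc hc
  constructor
  all_goals linarith [hB 0 6, hB 1 5, hB 2 4, hB 3 3, hB 4 2, hB 5 1, hB 6 0]

lemma eval_derivative_vietorisPoly_six_mem_Icc (hc : c ∈ Icc 0.747453 0.747455) :
    (vietorisPoly 6).derivative.eval c ∈ Icc 0.8933 0.8935 := by
  rw [eval_derivative_vietorisPoly_six]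
  have hB := pow_mul_pow_nonneg_of_mem_Icc hc
  constructor
  all_goals linarith [hB 0 5, hB 1 4, hB 2 3, hB 3 2, hB 4 1, hB 5 0]

end PolynomialInequalities

/-- A point within `1e-5` of the minimizer of `T6 t / (t - π) ^ 2`. Its distance to `π / 4` is small
enough for low-order Taylor bounds to locate its sine and cosine. -/
noncomputable def approxMinimizer : ℝ := π / 4 - 1 / 17

lemma approxMinimizer_mem_Ico : approxMinimizer ∈ Ico 0 π := by
  unfold approxMinimizer
  constructor <;> linarith [pi_gt_three]

lemma sqrt_two_mem_Icc : √2 ∈ Icc 1.4142135 1.4142136 :=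
  ⟨le_sqrt_of_sq_le (by norm_num), sqrt_le_iff.2 ⟨by norm_num, by norm_num⟩⟩

lemma cos_one_div_seventeen_mem_Icc : cos (1 / 17) ∈ Icc 0.9982692 0.9982706 := by
  have h := cos_bound (x := 1 / 17) (by norm_num [abs_of_pos])
  rw [abs_of_pos (by norm_num : (0 : ℝ) < 1 / 17), abs_le] at h
  constructor <;> linarith [h.1, h.2]

lemma sin_one_div_seventeen_mem_Icc : sin (1 / 17) ∈ Icc 0.0587895 0.0587897 := by
  have h := sin_bound (x := 1 / 17) (by norm_num [abs_of_pos])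
  rw [abs_of_pos (by norm_num : (0 : ℝ) < 1 / 17), abs_le] at h
  constructor <;> linarith [h.1, h.2]

lemma cos_approxMinimizer_mem_Icc : cos approxMinimizer ∈ Icc 0.747453 0.747455 := by
  obtain ⟨hr, hr'⟩ := sqrt_two_mem_Icc
  obtain ⟨hc, hc'⟩ := cos_one_div_seventeen_mem_Icc
  obtain ⟨hs, hs'⟩ := sin_one_div_seventeen_mem_Icc
  have hrot : cos approxMinimizer = √2 / 2 * (cos (1 / 17) + sin (1 / 17)) := by
    rw [approxMinimizer, cos_sub, cos_pi_div_four, sin_pi_div_four]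
    ring
  rw [hrot]
  constructor <;> nlinarith

lemma sin_approxMinimizer_mem_Icc : sin approxMinimizer ∈ Icc 0.66431 0.66432 := by
  obtain ⟨hr, hr'⟩ := sqrt_two_mem_Icc
  obtain ⟨hc, hc'⟩ := cos_one_div_seventeen_mem_Icc
  obtain ⟨hs, hs'⟩ := sin_one_div_seventeen_mem_Icc
  have hrot : sin approxMinimizer = √2 / 2 * (cos (1 / 17) - sin (1 / 17)) := by
    rw [approxMinimizer, sin_sub, cos_pi_div_four, sin_pi_div_four]
    ring
  rw [hrot]
  constructor <;> nlinarith

lemma pi_sub_approxMinimizer_mem_Icc : π - approxMinimizer ∈ Icc 2.415017 2.415019 := by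
  unfold approxMinimizer
  constructor <;> linarith [pi_gt_d6, pi_lt_d6]

lemma approxMinimizer_sub_pi_sq_mem_Icc : (approxMinimizer - π) ^ 2 ∈ Icc 5.8323 5.83232 := by
  obtain ⟨hl, hu⟩ := pi_sub_approxMinimizer_mem_Icc
  constructor <;> nlinarith

lemma le_eval_cos_approxMinimizer_sub_mul_sq :
    1e-5 ≤ (vietorisPoly 6).eval (cos approxMinimizer) - 0.122901 * (approxMinimizer - π) ^ 2 := by
  linarith [(eval_vietorisPoly_six_mem_Icc cos_approxMinimizer_mem_Icc).1,
    approxMinimizer_sub_pi_sq_mem_Icc.2]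

lemma abs_deriv_eval_cos_sub_mul_sq_approxMinimizer_le :
    |-((vietorisPoly 6).derivative.eval (cos approxMinimizer) * sin approxMinimizer)
      - 2 * 0.122901 * (approxMinimizer - π)| ≤ 1e-3 := by
  obtain ⟨hd, hd'⟩ := eval_derivative_vietorisPoly_six_mem_Icc cos_approxMinimizer_mem_Icc
  obtain ⟨hs, hs'⟩ := sin_approxMinimizer_mem_Icc
  obtain ⟨hl, hu⟩ := pi_sub_approxMinimizer_mem_Icc
  rw [abs_le]
  constructor <;> nlinarith

lemma mul_sq_le_T6_of_cos_mem_Icc {t : ℝ} (ht : t ∈ Icc 0 π)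
    (hcos : cos t ∈ Icc (3 / 5) (17 / 20)) : 0.122901 * (t - π) ^ 2 ≤ T6 t := by
  have hbase : approxMinimizer ∈ {t ∈ Icc 0 π | cos t ∈ Icc (3 / 5) (17 / 20)} :=
    ⟨Ico_subset_Icc_self approxMinimizer_mem_Ico,
      Icc_subset_Icc (by norm_num) (by norm_num) cos_approxMinimizer_mem_Icc⟩
  have hlower := sub_sq_div_le_of_le_deriv2 (convex_setOf_cos_mem_Icc (3 / 5) (17 / 20))
    (fun z _ => hasDerivAt_eval_cos_sub_mul_sq (vietorisPoly 6) 0.122901 π z)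
    (fun z _ => hasDerivAt_deriv_eval_cos_sub_mul_sq (vietorisPoly 6) 0.122901 π z) one_pos
    (fun z hz => one_le_deriv2_eval_vietorisPoly_six_cos_sub_mul_sq hz.2) hbase ⟨ht, hcos⟩
  have hderiv := sq_le_sq.2 (abs_deriv_eval_cos_sub_mul_sq_approxMinimizer_le.trans (le_abs_self _))
  rw [T6_eq_eval_vietorisPoly]
  linarith [le_eval_cos_approxMinimizer_sub_mul_sq]

lemma mul_pi_div_two_sq_le : 0.122901 * (π / 2) ^ 2 ≤ 0.3034 := by
  nlinarith [pi_pos, pi_lt_d4]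

lemma mul_sq_le_T6 {t : ℝ} (ht : t ∈ Icc 0 π) : 0.122901 * (t - π) ^ 2 ≤ T6 t := by
  have hcompare {q : ℝ} (hq : 0 ≤ q) (hsq : (t - π) ^ 2 ≤ (π / 2) ^ 2 * q)
      (hp : 0.3034 * q ≤ (vietorisPoly 6).eval (cos t)) : 0.122901 * (t - π) ^ 2 ≤ T6 t :=
    calc 0.122901 * (t - π) ^ 2 ≤ 0.122901 * ((π / 2) ^ 2 * q) := by gcongr
      _ = 0.122901 * (π / 2) ^ 2 * q := by ring
      _ ≤ 0.3034 * q := by gcongr; exact mul_pi_div_two_sq_le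
      _ ≤ T6 t := hp.trans_eq (T6_eq_eval_vietorisPoly t).symm
  rcases le_total (π / 2) t with htop | hbot
  · have hcos : cos t ≤ 0 := cos_nonpos_of_pi_div_two_le_of_le htop (by linarith [ht.2, pi_pos])
    exact hcompare (by rw [← sin_sq]; positivity) (sub_pi_sq_le_of_pi_div_two_le htop ht.2)
      (mul_one_sub_sq_le_eval_vietorisPoly_six ⟨neg_one_le_cos t, hcos⟩)
  · by_cases hwindow : cos t ∈ Icc (3 / 5) (17 / 20)
    · exact mul_sq_le_T6_of_cos_mem_Icc ht hwindow
    · have hcos : 0 ≤ cos t := cos_nonneg_of_mem_Icc ⟨by linarith [ht.1, pi_pos], hbot⟩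
      have houter : cos t ∈ Icc 0 (3 / 5) ∪ Icc (17 / 20) 1 := by
        rcases le_total (cos t) (3 / 5) with hle | hge
        · exact .inl ⟨hcos, hle⟩
        · exact .inr ⟨(not_le.1 fun hle => hwindow ⟨hge, hle⟩).le, cos_le_one t⟩
      exact hcompare (sq_nonneg _) (sub_pi_sq_le_of_le_pi_div_two ht.1 hbot)
        (mul_one_add_sq_le_eval_vietorisPoly_six houter)

lemma T6_approxMinimizer_div_lt : T6 approxMinimizer / (approxMinimizer - π) ^ 2 < 0.123 := by
  obtain ⟨hsq, -⟩ := approxMinimizer_sub_pi_sq_mem_Icc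
  rw [T6_eq_eval_vietorisPoly, div_lt_iff₀ (by linarith)]
  linarith [(eval_vietorisPoly_six_mem_Icc cos_approxMinimizer_mem_Icc).2]

theorem alpha_bounds : 0.1229 < α ∧ α < 0.123 := by
  have hlower : 0.122901 ∈ lowerBounds ((fun t => T6 t / (t - π) ^ 2) '' Ico 0 π) := by
    rintro _ ⟨t, ht, rfl⟩
    exact (le_div_iff₀ (sq_pos_of_neg (sub_neg.2 ht.2))).2 (mul_sq_le_T6 (Ico_subset_Icc_self ht))
  have hmem := mem_image_of_mem (fun t => T6 t / (t - π) ^ 2) approxMinimizer_mem_Ico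
  constructor
  · calc (0.1229 : ℝ) < 0.122901 := by norm_num
      _ ≤ α := le_csInf ⟨_, hmem⟩ hlower
  · exact (csInf_le ⟨_, hlower⟩ hmem).trans_lt T6_approxMinimizer_div_lt
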